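/- Let q = p^m where p ≡ 3 (mod 8) is prime and m ≡ 2 (mod 4). Let x, a, b be integers with x² = q (so q = x² + 4·0²), q = a² + 2b² with a ≡ 1 (mod 4), and suppose a = x + 4. Then D = C_0^8 ∪ C_1^8 ∪ C_2^8 ∪ C_5^8 is a skew Paley (q,(q−1)/2,(q−5)/4,(q−1)/4)-PDS corresponding to the Paley PDS C_0^2; that is, Δ(D) = ((q−5)/4)·C_0^2 + ((q−1)/4)·C_1^2 as multisets. -/

import Mathlib

open Finset

section Defs

variable {G : Type*} [AddCommGroup G] [Fintype G] [DecidableEq G]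

/-- The multiset `Δ(D)` of internal differences `x - y` (for `x ≠ y` in `D`). -/
def intDiff (D : Finset G) : Multiset G :=
  ((D ×ˢ D).filter (fun p => p.1 ≠ p.2)).val.map (fun p => p.1 - p.2)

/-- The multiset `Δ(D, E)` of external differences `x - y` for `x ∈ D`, `y ∈ E`. -/
def extDiff (D E : Finset G) : Multiset G :=
  (D ×ˢ E).val.map (fun p => p.1 - p.2)

/-- The finset `G^*` of nonzero elements of `G`. -/
def Gstar (G : Type*) [AddCommGroup G] [Fintype G] [DecidableEq G] : Finset G :=
  Finset.univ.erase 0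

/-- `A` is a `(v, k, lam, mu)` partial difference set in `G`:
`Δ(A) = lam • A^* + mu • (G^* \ A)`. -/
def IsPDS (A : Finset G) (v k lam mu : ℕ) : Prop :=
  Fintype.card G = v ∧ A.card = k ∧
    intDiff A = lam • (A.erase 0).val + mu • (Gstar G \ A).val

/-- `D` is a `(v, k, lam, mu)` skew partial difference set corresponding to the
`(v, k, lam, mu)`-PDS `A`: `Δ(D) = lam • A^* + mu • (G^* \ A)`. -/
def IsSkewPDS (D A : Finset G) (v k lam mu : ℕ) : Prop :=
  IsPDS A v k lam mu ∧ D.card = k ∧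
    intDiff D = lam • (A.erase 0).val + mu • (Gstar G \ A).val

/-- `D` is an `(n, m, k₁, …, k_m; lam, mu)` disjoint partial difference family relative
to `T`: the `D i` are pairwise disjoint subsets of `G^*` of sizes `k i`, and
`∑ i, Δ(D i) = lam • T + mu • (G^* \ T)`. -/
def IsDPDF {ι : Type*} [Fintype ι] (D : ι → Finset G) (n m : ℕ) (k : ι → ℕ)
    (T : Finset G) (lam mu : ℕ) : Prop :=
  Fintype.card G = n ∧ Fintype.card ι = m ∧
    (∀ i, (0 : G) ∉ D i) ∧ (∀ i, (D i).card = k i) ∧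
    (Pairwise (fun i j => Disjoint (D i) (D j))) ∧
    ∑ i, intDiff (D i) = lam • T.val + mu • (Gstar G \ T).val

/-- `D` is an `(n, m, k₁, …, k_m; lam, mu)` external partial difference family relative
to `T`: the `D i` are pairwise disjoint subsets of `G^*` of sizes `k i`, and
`∑_{i ≠ j}, Δ(D i, D j) = lam • T + mu • (G^* \ T)`. -/
def IsEPDF {ι : Type*} [Fintype ι] [DecidableEq ι] (D : ι → Finset G) (n m : ℕ)
    (k : ι → ℕ) (T : Finset G) (lam mu : ℕ) : Prop :=
  Fintype.card G = n ∧ Fintype.card ι = m ∧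
    (∀ i, (0 : G) ∉ D i) ∧ (∀ i, (D i).card = k i) ∧
    (Pairwise (fun i j => Disjoint (D i) (D j))) ∧
    ∑ i, ∑ j ∈ Finset.univ.erase i, extDiff (D i) (D j)
      = lam • T.val + mu • (Gstar G \ T).val

/-- `D` is an `(n, m, k₁, …, k_m, lam)` disjoint difference family:
`∑ i, Δ(D i) = lam • G^*`. -/
def IsDDF {ι : Type*} [Fintype ι] (D : ι → Finset G) (n m : ℕ) (k : ι → ℕ)
    (lam : ℕ) : Prop :=
  Fintype.card G = n ∧ Fintype.card ι = m ∧
    (∀ i, (0 : G) ∉ D i) ∧ (∀ i, (D i).card = k i) ∧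
    (Pairwise (fun i j => Disjoint (D i) (D j))) ∧
    ∑ i, intDiff (D i) = lam • (Gstar G).val

/-- `D` is an `(n, m, k₁, …, k_m, lam)` external difference family:
`∑_{i ≠ j}, Δ(D i, D j) = lam • G^*`. -/
def IsEDF {ι : Type*} [Fintype ι] [DecidableEq ι] (D : ι → Finset G) (n m : ℕ)
    (k : ι → ℕ) (lam : ℕ) : Prop :=
  Fintype.card G = n ∧ Fintype.card ι = m ∧
    (∀ i, (0 : G) ∉ D i) ∧ (∀ i, (D i).card = k i) ∧
    (Pairwise (fun i j => Disjoint (D i) (D j))) ∧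
    ∑ i, ∑ j ∈ Finset.univ.erase i, extDiff (D i) (D j) = lam • (Gstar G).val

end Defs

section Cyclotomy

variable {F : Type*} [Field F] [Fintype F] [DecidableEq F]

/-- The cyclotomic class `C_i^e = α^i ⟨α^e⟩` of order `e` in the finite field `F`,
with respect to the primitive element `α`.  (Since `α` has multiplicative order at most
`|F| - 1`, letting `j` range over `0, …, |F| - 1` captures the whole class.) -/
def cycClass (α : F) (e i : ℕ) : Finset F :=
  (Finset.range (Fintype.card F)).image (fun j => α ^ (e * j + i))

/-- `α` is a primitive element of the finite field `F`: every nonzero element of `F`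
is a power of `α`. -/
def IsPrimitiveElt (α : F) : Prop :=
  ∀ x : F, x ≠ 0 → ∃ n : ℕ, α ^ n = x

end Cyclotomy

/-!
Let `χ` be a character of order `8`, so that `χ (-1) = -1`. The multiset `Δ(D)` is determined by
the autocorrelation of the signed indicator `s` of `D`, which is the sum of an even function
`f = -(χ α ^ 2 / 2) * (χ ^ 2 - χ ^ 6)` and an odd function built from `χ, χ ^ 3, χ ^ 5, χ ^ 7`. The
cross-correlations of the two parts cancel, and the remaining correlations are Jacobi sums. Since
`p ≡ 3 (mod 8)` forces `χ 4 = 1`, the duplication formula reduces these to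
`J(χ, χ) = A + B * √-2` and `J(χ ^ 2, χ ^ 2) = S` with integers `A, B, S`, and the autocorrelation
at `z ≠ 0` becomes `-1 + (A - S) / 2 * (χ z ^ 4 - f z)`. For `A - S = -4` this is the value
`s z + s (-z) - 1 - 2 * χ z ^ 4` that characterizes a skew PDS.

The norms of the Jacobi sums give `A ^ 2 + 2 * B ^ 2 = q` and `S ^ 2 = q`. If `p` divided `A`, it
would divide `B` too, and the reduction of `J(χ, χ)` modulo a prime above `p` would vanish; but up
to sign this reduction is the binomial coefficient `(7 * e).choose e` with `8 * e = q - 1`, which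
is nonzero modulo `p` by the theorem of Lucas. Hence `A = ±a` and `S = ±x`; the signs `A = -a` and
`S = -x` follow from `A ≡ S ≡ 3 (mod 4)`, since the numbers of `y` with `y * (1 - y)` in a class
`C_i^8`, `i ≠ 0`, are even.
-/

section SignIndicator

variable {G : Type*} [AddCommGroup G] [DecidableEq G]

/-- The `±1`-valued indicator of `D` on the nonzero elements of `G`, extended by `0` at `0`; its
autocorrelations `∑ x, s x * s (x - z)` carry the same information as the multiset `Δ(D)`. -/
def signIndicator (D : Finset G) (x : G) : ℤ :=
  if x = 0 then 0 else if x ∈ D then 1 else -1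

theorem signIndicator_of_notMem_zero {D : Finset G} (hD : 0 ∉ D) (x : G) :
    signIndicator D x = 2 * (if x ∈ D then 1 else 0) - 1 + (if x = 0 then 1 else 0) := by
  by_cases hx : x = 0
  · simp [signIndicator, hx, hD]
  · by_cases hxD : x ∈ D <;> simp [signIndicator, hx, hxD]

theorem count_intDiff_zero (D : Finset G) : (intDiff D).count 0 = 0 := by
  rw [Multiset.count_eq_zero, intDiff, Multiset.mem_map]
  rintro ⟨⟨x, y⟩, hxy, h⟩
  exact (mem_filter.1 hxy).2 (sub_eq_zero.1 h)

theorem count_intDiff (D : Finset G) {z : G} (hz : z ≠ 0) :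
    (intDiff D).count z = #{x ∈ D | x - z ∈ D} := by
  rw [intDiff, Multiset.count_map, ← filter_val, card_val]
  refine card_nbij' Prod.fst (fun x => (x, x - z)) ?_ ?_ ?_ fun _ _ => rfl
  · rintro ⟨x, y⟩ h
    simp only [coe_filter, mem_filter, mem_product, Set.mem_ofPred_eq] at h ⊢
    simp [h]
  · intro x h
    simp only [coe_filter, mem_filter, mem_product, Set.mem_ofPred_eq] at h ⊢
    exact ⟨⟨h, fun hx => hz (sub_eq_self.1 hx.symm)⟩, (sub_sub_cancel x z).symm⟩
  · rintro ⟨x, y⟩ h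
    simp only [coe_filter, Set.mem_ofPred_eq] at h
    simp [h]

variable [Fintype G]

theorem card_eq_of_sum_signIndicator_eq_zero {D : Finset G} (hD : 0 ∉ D)
    (hsum : ∑ x, signIndicator D x = 0) : #D = (Fintype.card G - 1) / 2 := by
  simp only [signIndicator_of_notMem_zero hD, sum_add_distrib, sum_sub_distrib, ← mul_sum,
    sum_boole, sum_const, filter_univ_mem, filter_eq', mem_univ, if_true, card_singleton,
    card_univ] at hsum
  push_cast at hsum
  simp only [nsmul_eq_mul, mul_one] at hsum
  omega

theorem four_mul_card_filter_sub_mem {D : Finset G} (hD : 0 ∉ D)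
    (hsum : ∑ x, signIndicator D x = 0) {z : G} (hz : z ≠ 0) :
    4 * (#{x ∈ D | x - z ∈ D} : ℤ) = Fintype.card G - 2 - signIndicator D z
      - signIndicator D (-z) + ∑ x, signIndicator D x * signIndicator D (x - z) := by
  set s := signIndicator D with hs
  have pointwise (x : G) : 4 * (if x ∈ D ∧ x - z ∈ D then 1 else 0 : ℤ) =
      1 - (if x = 0 then 1 else 0) - (if x = z then 1 else 0) + s x + s (x - z)
      - (if x = 0 then s (-z) else 0) - (if x = z then s z else 0) + s x * s (x - z) := by
    by_cases hx : x = 0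
    · simp [hs, hx, hz.symm, hD, signIndicator]
    · by_cases hxz : x = z
      · simp [hs, hxz, hz, hD, signIndicator]
      · by_cases hxD : x ∈ D <;> by_cases hxzD : x - z ∈ D <;>
          simp [hs, hx, hxz, hxD, hxzD, signIndicator, sub_eq_zero]
  have hshift : ∑ x, s (x - z) = 0 := by rw [← hsum]; exact (Equiv.subRight z).sum_comp s
  have hcard : #{x ∈ D | x - z ∈ D} = #{x | x ∈ D ∧ x - z ∈ D} := by
    rw [← filter_filter, filter_univ_mem]
  rw [hcard, card_filter]
  push_cast
  rw [mul_sum, sum_congr rfl fun x _ => pointwise x]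
  simp only [sum_add_distrib, sum_sub_distrib, sum_ite_eq', sum_const, hsum, hshift, mem_univ,
    if_true, card_univ, nsmul_eq_mul, mul_one, add_zero]
  ring

theorem intDiff_eq_of_autocorrelation {A D : Finset G} (hD : 0 ∉ D)
    (hsum : ∑ x, signIndicator D x = 0)
    (hauto : ∀ z ≠ 0, ∑ x, signIndicator D x * signIndicator D (x - z) =
      signIndicator D z + signIndicator D (-z) - 1 - 2 * signIndicator A z) :
    intDiff D = ((Fintype.card G - 5) / 4) • (A.erase 0).val
      + ((Fintype.card G - 1) / 4) • (Gstar G \ A).val := by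
  ext z
  simp only [Multiset.count_add, Multiset.count_nsmul, Multiset.count_eq_of_nodup (nodup _),
    mem_val, Gstar, mem_erase, mem_sdiff, mem_univ, and_true]
  rcases eq_or_ne z 0 with rfl | hz
  · simp [count_intDiff_zero]
  · have hcount := four_mul_card_filter_sub_mem hD hsum hz
    rw [hauto z hz] at hcount
    rw [count_intDiff D hz]
    by_cases hzA : z ∈ A <;> simp only [signIndicator, hz, hzA, if_true, if_false] at hcount <;>
      simp [hz, hzA] <;> omega

end SignIndicator

section PrimePower

theorem eq_zero_of_sq_add_mul_sq_eq_sq {d n t w : ℤ} (hd : 1 < d) (hn : n ≠ 0)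
    (h : t ^ 2 + d * w ^ 2 = n ^ 2) (hdvd : n ∣ w) : w = 0 := by
  obtain ⟨k, rfl⟩ := hdvd
  by_contra hk
  have hn2 : 0 < n ^ 2 := by positivity
  have hk2 : 0 < k ^ 2 := sq_pos_of_ne_zero (right_ne_zero_of_mul hk)
  nlinarith [sq_nonneg t, mul_pos hn2 hk2]

theorem mul_eq_or_mul_eq_neg_of_sq_add_mul_sq {p m : ℕ} (hp : p.Prime) (hp2 : p ≠ 2)
    {d u v a b : ℤ} (hd : 1 < d) (huv : u ^ 2 + d * v ^ 2 = (p : ℤ) ^ m)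
    (hab : a ^ 2 + d * b ^ 2 = (p : ℤ) ^ m) (hub : ¬ (p : ℤ) ∣ u * b) :
    u * b = v * a ∨ u * b = -(v * a) := by
  have hpZ : Prime (p : ℤ) := Nat.prime_iff_prime_int.1 hp
  have hq : (p : ℤ) ^ m ≠ 0 := pow_ne_zero m hpZ.ne_zero
  have hprod : (u * b - v * a) * (u * b + v * a) = (p : ℤ) ^ m * (b ^ 2 - v ^ 2) := by
    linear_combination b ^ 2 * huv - v ^ 2 * hab
  by_cases hdvd : (p : ℤ) ∣ u * b - v * a
  · have hnot : ¬ (p : ℤ) ∣ u * b + v * a := fun h => by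
      have h2 : (p : ℤ) ∣ 2 * (u * b) := by
        rw [show 2 * (u * b) = u * b - v * a + (u * b + v * a) by ring]
        exact dvd_add hdvd h
      refine (hpZ.dvd_or_dvd h2).elim (fun h => hp2 ?_) hub
      exact (Nat.prime_dvd_prime_iff_eq hp Nat.prime_two).1 (by exact_mod_cast h)
    refine .inl (sub_eq_zero.1 (eq_zero_of_sq_add_mul_sq_eq_sq (t := u * a + d * v * b) hd hq ?_
      (hpZ.pow_dvd_of_dvd_mul_right m hnot (Dvd.intro _ hprod.symm))))
    linear_combination (a ^ 2 + d * b ^ 2) * huv + (p : ℤ) ^ m * hab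
  · refine .inr (eq_neg_of_add_eq_zero_left (eq_zero_of_sq_add_mul_sq_eq_sq
      (t := u * a - d * v * b) hd hq ?_
      (hpZ.pow_dvd_of_dvd_mul_left m hdvd (Dvd.intro _ hprod.symm))))
    linear_combination (a ^ 2 + d * b ^ 2) * huv + (p : ℤ) ^ m * hab

theorem eq_or_eq_neg_of_sq_add_mul_sq_eq_prime_pow {p m : ℕ} (hp : p.Prime) (hp2 : p ≠ 2)
    (hm : m ≠ 0) {d u v a b : ℤ} (hd : 1 < d) (huv : u ^ 2 + d * v ^ 2 = (p : ℤ) ^ m)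
    (hab : a ^ 2 + d * b ^ 2 = (p : ℤ) ^ m) (hu : ¬ (p : ℤ) ∣ u) (ha : ¬ (p : ℤ) ∣ a) :
    u = a ∨ u = -a := by
  have hpZ : Prime (p : ℤ) := Nat.prime_iff_prime_int.1 hp
  have hb : ¬ (p : ℤ) ∣ b := fun hb => ha <| hpZ.dvd_of_dvd_pow (n := 2) <| by
    rw [eq_sub_of_add_eq hab]
    exact dvd_sub (dvd_pow_self _ hm) ((dvd_pow hb two_ne_zero).mul_left d)
  have hsq : (u * b) ^ 2 = (v * a) ^ 2 := sq_eq_sq_iff_eq_or_eq_neg.2 <|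
    mul_eq_or_mul_eq_neg_of_sq_add_mul_sq hp hp2 hd huv hab (hpZ.not_dvd_mul hu hb)
  refine sq_eq_sq_iff_eq_or_eq_neg.1 (mul_left_cancel₀ (pow_ne_zero m hpZ.ne_zero) ?_)
  linear_combination a ^ 2 * huv - u ^ 2 * hab + d * hsq

theorem pow_mod_sixteen_eq_nine {p m : ℕ} (hp8 : p % 8 = 3) (hm : m % 4 = 2) :
    p ^ m % 16 = 9 := by
  have hp : p % 16 = 3 ∨ p % 16 = 11 := by omega
  rw [← Nat.div_add_mod m 4, hm, Nat.pow_mod, pow_add, pow_mul, Nat.mul_mod, Nat.pow_mod]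
  rcases hp with hp | hp <;> norm_num [hp]

theorem not_dvd_add_four_of_sq_eq_prime_pow {p m : ℕ} (hp : p.Prime) (hp2 : p ≠ 2) (hm : m ≠ 0)
    {x : ℤ} (hx : x ^ 2 = (p : ℤ) ^ m) : ¬ (p : ℤ) ∣ x + 4 := by
  have hpx : (p : ℤ) ∣ x := by
    refine Int.Prime.dvd_pow' hp (k := 2) ?_
    rw [hx]
    exact dvd_pow_self _ hm
  rw [Int.dvd_add_right hpx]
  intro h4
  exact hp2 ((Nat.prime_dvd_prime_iff_eq hp Nat.prime_two).1
    (hp.dvd_of_dvd_pow (n := 2) (by exact_mod_cast h4)))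

end PrimePower

section PowerSum

variable {F : Type*} [Field F] [Fintype F]

theorem sum_pow_eq_ite_card_sub_one_dvd {i : ℕ} (hi : i ≠ 0) :
    ∑ x : F, x ^ i = if Fintype.card F - 1 ∣ i then -1 else 0 := by
  classical
  rw [← FiniteField.sum_pow_units F i]
  refine (Fintype.sum_of_injective Units.val Units.val_injective _ _ (fun x hx => ?_)
    fun _ => rfl).symm
  have hx0 : x = 0 := by_contra fun h => hx ⟨Units.mk0 x h, rfl⟩
  rw [hx0, zero_pow hi]

theorem sum_pow_mul_one_sub_pow {m n k : ℕ} (hm : m ≠ 0) (hmk : m + k = Fintype.card F - 1)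
    (hmn : m + n < 2 * (Fintype.card F - 1)) :
    ∑ x : F, x ^ m * (1 - x) ^ n = -((-1) ^ k * (n.choose k : F)) := by
  have expand (x : F) : x ^ m * (1 - x) ^ n =
      ∑ i ∈ range (n + 1), (-1) ^ i * (n.choose i : F) * x ^ (m + i) := by
    rw [sub_eq_neg_add, add_pow, mul_sum]
    refine sum_congr rfl fun i _ => ?_
    rw [neg_pow x i, one_pow, pow_add]
    ring
  simp only [expand]
  have power_sum (i : ℕ) := sum_pow_eq_ite_card_sub_one_dvd (F := F) (by omega : m + i ≠ 0)
  rw [sum_comm]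
  simp only [← mul_sum, power_sum]
  rw [sum_eq_single k]
  · rw [hmk, if_pos dvd_rfl, mul_neg_one]
  · intro i hi hik
    rw [if_neg, mul_zero]
    rintro ⟨c, hc⟩
    have hc2 : c < 2 := by
      rw [mem_range] at hi
      exact lt_of_mul_lt_mul_left (a := Fintype.card F - 1) (by omega) (Nat.zero_le _)
    interval_cases c <;> omega
  · intro hk
    rw [mem_range, not_lt, Nat.succ_le_iff] at hk
    rw [Nat.choose_eq_zero_of_lt hk, Nat.cast_zero, mul_zero, zero_mul]

end PowerSum

section Lucas

theorem dvd_choose_digit_add_iff {p n₀ k₀ : ℕ} (hp : p.Prime) (hn : n₀ < p) (hk : k₀ < p)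
    (n k : ℕ) :
    p ∣ (n₀ + p * n).choose (k₀ + p * k) ↔ p ∣ n₀.choose k₀ ∨ p ∣ n.choose k := by
  have : Fact p.Prime := ⟨hp⟩
  have lucas := Choose.choose_modEq_choose_mod_mul_choose_div_nat (p := p)
    (n := n₀ + p * n) (k := k₀ + p * k)
  rw [Nat.add_mul_mod_self_left, Nat.add_mul_mod_self_left, Nat.add_mul_div_left _ _ hp.pos,
    Nat.add_mul_div_left _ _ hp.pos, Nat.mod_eq_of_lt hn, Nat.mod_eq_of_lt hk,
    Nat.div_eq_of_lt hn, Nat.div_eq_of_lt hk, zero_add, zero_add] at lucas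
  rw [lucas.dvd_iff dvd_rfl, hp.dvd_mul]

theorem not_dvd_choose_of_lt {p n k : ℕ} (hp : p.Prime) (hn : n < p) (hk : k ≤ n) :
    ¬ p ∣ n.choose k :=
  hp.coprime_iff_not_dvd.1 (Nat.Prime.coprime_choose_of_lt hp hn hk)

-- With `p = 8k + 3`, the base-`p` digits of `7e` are `5k + 1` and `7k + 2` in alternation, and
-- those of `e` are `3k + 1` and `k`, so that no carry occurs.
theorem not_dvd_choose_seven_mul {p : ℕ} (hp : p.Prime) (hp8 : p % 8 = 3) (t : ℕ) {e : ℕ}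
    (he : 8 * e + 1 = p ^ (2 * t)) : ¬ p ∣ (7 * e).choose e := by
  obtain ⟨k, hk⟩ : ∃ k, p = 8 * k + 3 := ⟨p / 8, by omega⟩
  induction t generalizing e with
  | zero =>
    obtain rfl : e = 0 := by simpa using he
    simpa using hp.one_lt.ne'
  | succ t ih =>
    obtain ⟨e', he'⟩ : ∃ e', 8 * e' + 1 = p ^ (2 * t) := by
      have hmod : p ^ (2 * t) % 8 = 1 := by
        rw [pow_mul, Nat.pow_mod, Nat.pow_mod p 2, hp8, Nat.one_pow]
      exact ⟨p ^ (2 * t) / 8, by omega⟩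
    have hee' : e = p ^ 2 * e' + (8 * k ^ 2 + 6 * k + 1) := by
      have hpow : 8 * e + 1 = p ^ 2 * (8 * e' + 1) := by rw [he, he']; ring
      have hsq : p ^ 2 = 8 * (8 * k ^ 2 + 6 * k + 1) + 1 := by rw [hk]; ring
      linarith
    have digits_e : e = (3 * k + 1) + p * (k + p * e') := by rw [hee', hk]; ring
    have digits_seven_e : 7 * e = (5 * k + 1) + p * ((7 * k + 2) + p * (7 * e')) := by
      rw [hee', hk]; ring
    rw [digits_seven_e, digits_e, dvd_choose_digit_add_iff hp (by omega) (by omega),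
      dvd_choose_digit_add_iff hp (by omega) (by omega)]
    simp only [ih he', or_false, not_or]
    exact ⟨not_dvd_choose_of_lt hp (by omega) (by omega),
      not_dvd_choose_of_lt hp (by omega) (by omega)⟩

end Lucas

section PrimitiveElement

theorem pow_eq_pow_iff_of_isPrimitiveRoot {M : Type*} [CommMonoid M] {ζ : M} {k m n : ℕ}
    (hζ : IsPrimitiveRoot ζ k) (hk : k ≠ 0) : ζ ^ m = ζ ^ n ↔ m ≡ n [MOD k] := by
  rw [(hζ.isOfFinOrder hk).pow_eq_pow_iff_modEq, ← hζ.eq_orderOf]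

theorem mulChar_generator_eq_neg_one {M R : Type*} [CommMonoid M] [CommRing R] [IsDomain R]
    {g : Mˣ} (hg : ∀ x, x ∈ Subgroup.zpowers g) {χ : MulChar M R} (hsq : χ ^ 2 = 1)
    (hne : χ ≠ 1) : χ g = -1 := by
  have h : χ g ^ 2 = 1 := by rw [← MulChar.pow_apply_coe, hsq, MulChar.one_apply_coe]
  refine (sq_eq_one_iff.1 h).resolve_left fun h1 => hne ?_
  exact (MulChar.eq_iff hg _ _).2 (by rw [h1, MulChar.one_apply_coe])

theorem mulChar_four_eq_one {F R : Type*} [Field F] [CommRing R] {p : ℕ} [Fact p.Prime] [CharP F p]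
    (hp8 : p % 8 = 3) {χ : MulChar F R} (hχ : χ ^ 8 = 1) : χ 4 = 1 := by
  have hunit : IsUnit (2 : F) := isUnit_iff_ne_zero.2 <| Ring.two_ne_zero <| by
    rw [ringChar.eq F p]
    omega
  have hpow8 : χ 2 ^ 8 = 1 := by
    rw [← hunit.unit_spec, ← MulChar.pow_apply_coe, hχ, MulChar.one_apply_coe]
  have hfrob : χ 2 ^ p = χ 2 := by
    rw [← map_pow, ← frobenius_def, map_ofNat (frobenius F p) 2]
  have hsq : χ 2 ^ 2 = 1 := by
    refine (hunit.map χ).mul_left_cancel ?_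
    rw [mul_one, ← pow_succ']
    conv_rhs => rw [← hfrob, ← Nat.div_add_mod p 8, hp8, pow_add, pow_mul, hpow8, one_pow, one_mul]
  rw [← hsq, ← map_pow]
  norm_num

variable {F : Type*} [Field F] [Fintype F] {α : F}

theorem IsPrimitiveElt.isPrimitiveRoot (hα : IsPrimitiveElt α) (hF : 2 < Fintype.card F) :
    IsPrimitiveRoot α (Fintype.card F - 1) := by
  classical
  have hα0 : α ≠ 0 := by
    rintro rfl
    obtain ⟨x, hx, hx1⟩ : ∃ x : F, x ≠ 0 ∧ x ≠ 1 := by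
      obtain ⟨x, -, hx⟩ := exists_mem_notMem_of_card_lt_card
        (s := {0, 1}) (t := (univ : Finset F)) (card_le_two.trans_lt hF)
      exact ⟨x, by simpa using hx⟩
    obtain ⟨n, rfl⟩ := hα x hx
    rcases n.eq_zero_or_pos with rfl | hn
    · exact hx1 (pow_zero 0)
    · exact hx (zero_pow hn.ne')
  have hgen (x : Fˣ) : x ∈ Subgroup.zpowers (Units.mk0 α hα0) := by
    obtain ⟨n, hn⟩ := hα x x.ne_zero
    exact ⟨n, Units.ext (by simpa using hn)⟩
  rw [← Fintype.card_units, ← Nat.card_eq_fintype_card,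
    ← orderOf_eq_card_of_forall_mem_zpowers hgen, ← orderOf_units, Units.val_mk0]
  exact IsPrimitiveRoot.orderOf α

theorem exists_pow_eq_of_ne_zero (hα : IsPrimitiveRoot α (Fintype.card F - 1)) {x : F}
    (hx : x ≠ 0) : ∃ n, α ^ n = x := by
  have : NeZero (Fintype.card F - 1) := ⟨(Nat.sub_pos_of_lt Fintype.one_lt_card).ne'⟩
  obtain ⟨n, -, hn⟩ := hα.eq_pow_of_pow_eq_one (FiniteField.pow_card_sub_one_eq_one x hx)
  exact ⟨n, hn⟩

theorem isUnit_of_isPrimitiveRoot (hα : IsPrimitiveRoot α (Fintype.card F - 1)) : IsUnit α :=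
  hα.isUnit (Nat.sub_pos_of_lt Fintype.one_lt_card).ne'

theorem pow_card_sub_one_div_two_eq_neg_one (hα : IsPrimitiveRoot α (Fintype.card F - 1)) {n : ℕ}
    (hn : Fintype.card F - 1 = n * 2) : α ^ n = -1 :=
  (hα.pow (Nat.sub_pos_of_lt Fintype.one_lt_card) hn).eq_neg_one_of_two_right

theorem isPrimitiveRoot_mulChar_apply {R : Type*} [CommRing R]
    (hα : IsPrimitiveRoot α (Fintype.card F - 1)) (χ : MulChar F R) :
    IsPrimitiveRoot (χ α) (orderOf χ) := by
  obtain ⟨g, rfl⟩ := isUnit_of_isPrimitiveRoot hα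
  have hgen (x : Fˣ) : x ∈ Subgroup.zpowers g := by
    obtain ⟨n, hn⟩ := exists_pow_eq_of_ne_zero hα x.ne_zero
    exact ⟨n, Units.ext (by simpa using hn)⟩
  refine ⟨by rw [← MulChar.pow_apply_coe, pow_orderOf_eq_one, MulChar.one_apply_coe], ?_⟩
  intro n hn
  rw [← MulChar.pow_apply_coe] at hn
  exact orderOf_dvd_of_pow_eq_one ((MulChar.eq_iff hgen _ _).2 (by rw [hn, MulChar.one_apply_coe]))

section CycClass

variable [DecidableEq F]

theorem pow_mem_cycClass_iff (hα : IsPrimitiveRoot α (Fintype.card F - 1)) {e i : ℕ}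
    (he : e ∣ Fintype.card F - 1) (hi : i < e) (n : ℕ) :
    α ^ n ∈ cycClass α e i ↔ n % e = i := by
  have hq := Nat.sub_pos_of_lt (Fintype.one_lt_card (α := F))
  rw [cycClass, mem_image]
  constructor
  · rintro ⟨j, -, hj⟩
    have hmod : e * j + i ≡ n [MOD e] := by
      exact Nat.ModEq.of_dvd he ((pow_eq_pow_iff_of_isPrimitiveRoot hα hq.ne').1 hj)
    rw [← hmod, Nat.mul_add_mod, Nat.mod_eq_of_lt hi]
  · intro hn
    refine ⟨n / e % (Fintype.card F - 1), mem_range.2 ?_, ?_⟩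
    · exact (Nat.mod_lt _ hq).trans_le (Nat.sub_le _ _)
    · conv_rhs => rw [← Nat.div_add_mod n e, hn]
      exact (pow_eq_pow_iff_of_isPrimitiveRoot hα hq.ne').2
        (((Nat.mod_modEq _ _).mul_left e).add_right i)

theorem zero_notMem_cycClass (hα : IsPrimitiveRoot α (Fintype.card F - 1)) (e i : ℕ) :
    0 ∉ cycClass α e i := by
  rw [cycClass, mem_image]
  rintro ⟨j, -, hj⟩
  exact ((isUnit_of_isPrimitiveRoot hα).pow _).ne_zero hj

theorem mem_cycClass_iff_mulChar {R : Type*} [CommRing R] [Nontrivial R]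
    (hα : IsPrimitiveRoot α (Fintype.card F - 1)) (χ : MulChar F R) {i : ℕ} (hi : i < orderOf χ)
    {x : F} : x ∈ cycClass α (orderOf χ) i ↔ χ x = χ α ^ i := by
  have hχ := isPrimitiveRoot_mulChar_apply hα χ
  rcases eq_or_ne x 0 with rfl | hx
  · rw [MulChar.map_zero]
    have := (((isUnit_of_isPrimitiveRoot hα).map χ).pow i).ne_zero
    simp [zero_notMem_cycClass hα, this.symm]
  · obtain ⟨n, rfl⟩ := exists_pow_eq_of_ne_zero hα hx
    have hdvd : orderOf χ ∣ Fintype.card F - 1 := hχ.dvd_of_pow_eq_one _ <| by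
      rw [← map_pow, hα.pow_eq_one, map_one]
    rw [pow_mem_cycClass_iff hα hdvd hi, map_pow,
      pow_eq_pow_iff_of_isPrimitiveRoot hχ (Nat.ne_zero_of_lt hi), Nat.ModEq, Nat.mod_eq_of_lt hi]

end CycClass

section MulChar

variable {R : Type*} [CommRing R] [IsDomain R]

theorem eq_quadraticChar_of_sq_eq_one [DecidableEq F] (hF : ringChar F ≠ 2)
    {χ : MulChar F R} (hsq : χ ^ 2 = 1) (hne : χ ≠ 1) :
    χ = (quadraticChar F).ringHomComp (Int.castRingHom R) := by
  obtain ⟨g, hg⟩ := IsCyclic.exists_generator (α := Fˣ)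
  rw [MulChar.eq_iff hg, mulChar_generator_eq_neg_one hg hsq hne, MulChar.ringHomComp_apply,
    mulChar_generator_eq_neg_one hg (quadraticChar_isQuadratic F).sq_eq_one
      (quadraticChar_ne_one hF), map_neg, map_one]

theorem mulChar_neg_one_eq_neg_one (hα : IsPrimitiveRoot α (Fintype.card F - 1))
    {χ : MulChar F R} {n e : ℕ} (hn : 0 < n) (hχ : orderOf χ = n * 2)
    (hcard : Fintype.card F - 1 = n * 2 * e) (he : Odd e) : χ (-1) = -1 := by
  have hroot : χ α ^ n = -1 :=
    ((hχ ▸ isPrimitiveRoot_mulChar_apply hα χ).pow (by omega) rfl).eq_neg_one_of_two_right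
  rw [← pow_card_sub_one_div_two_eq_neg_one hα (n := n * e) (by rw [hcard]; ring), map_pow,
    pow_mul, hroot, he.neg_one_pow]

end MulChar

end PrimitiveElement

section Correlation

theorem sum_mul_sub_add_sum_mul_sub_eq_zero {G R : Type*} [AddCommGroup G] [Fintype G]
    [CommRing R] {f g : G → R} (hf : Function.Odd f) (hg : Function.Even g) (z : G) :
    ∑ x, f x * g (x - z) + ∑ x, g x * f (x - z) = 0 := by
  rw [← (Equiv.subLeft z).sum_comp fun x => f x * g (x - z), ← sum_add_distrib]
  refine sum_eq_zero fun x _ => ?_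
  rw [Equiv.subLeft_apply, show z - x - z = -x by abel, hg, ← neg_sub x z, hf]
  ring

end Correlation

section JacobiSum

variable {F R : Type*} [Field F] [Fintype F] [CommRing R]

theorem sum_mulChar_mul_mulChar_sub (χ ψ : MulChar F R) {z : F} (hz : z ≠ 0) :
    ∑ x, χ x * ψ (z - x) = χ z * ψ z * jacobiSum χ ψ := by
  rw [jacobiSum, ← Equiv.sum_comp (Equiv.mulLeft₀ z hz), mul_sum]
  refine sum_congr rfl fun x _ => ?_
  rw [Equiv.mulLeft₀_apply, ← mul_one_sub, map_mul, map_mul]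
  ring

theorem sum_mulChar_mul_mulChar_sub_swap (χ ψ : MulChar F R) {z : F} (hz : z ≠ 0) :
    ∑ x, χ x * ψ (x - z) = ψ (-1) * (χ z * ψ z) * jacobiSum χ ψ := by
  rw [mul_assoc, ← sum_mulChar_mul_mulChar_sub χ ψ hz, mul_sum]
  refine sum_congr rfl fun x _ => ?_
  rw [← neg_sub z x, neg_eq_neg_one_mul, map_mul]
  ring

theorem sum_pow_mul_pow_sub (χ : MulChar F R) {j k : ℕ} (hj : j ≠ 0) (hk : k ≠ 0) {z : F}
    (hz : z ≠ 0) :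
    ∑ x, χ x ^ j * χ (x - z) ^ k = χ (-1) ^ k * χ z ^ (j + k) * jacobiSum (χ ^ j) (χ ^ k) := by
  simpa only [MulChar.pow_apply' χ hj, MulChar.pow_apply' χ hk, pow_add]
    using sum_mulChar_mul_mulChar_sub_swap (χ ^ j) (χ ^ k) hz

theorem jacobiSum_mul_inv (χ ψ : MulChar F R) :
    jacobiSum χ (χ * ψ)⁻¹ = χ (-1) * jacobiSum χ ψ := by
  classical
  have involutive {x : F} (hx : x ≠ 1) : x / (x - 1) / (x / (x - 1) - 1) = x := by
    have := sub_ne_zero.2 hx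
    rw [div_sub_one this, sub_sub_cancel, div_div_div_cancel_right₀ this, div_one]
  have ne_one {x : F} (hx : x ≠ 1) : x / (x - 1) ≠ 1 := by
    rw [Ne, div_eq_one_iff_eq (sub_ne_zero.2 hx)]
    exact fun h => one_ne_zero (sub_eq_self.1 h.symm)
  have sum_eq (χ' ψ' : MulChar F R) :
      jacobiSum χ' ψ' = ∑ x ∈ univ.erase 1, χ' x * ψ' (1 - x) := by
    rw [sum_erase _ (by rw [sub_self, MulChar.map_zero, mul_zero]), jacobiSum]
  rw [sum_eq, sum_eq, mul_sum]
  refine sum_nbij' (fun x => x / (x - 1)) (fun x => x / (x - 1)) ?_ ?_ ?_ ?_ ?_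
  · exact fun x hx => mem_erase.2 ⟨ne_one (ne_of_mem_erase hx), mem_univ _⟩
  · exact fun x hx => mem_erase.2 ⟨ne_one (ne_of_mem_erase hx), mem_univ _⟩
  · exact fun x hx => involutive (ne_of_mem_erase hx)
  · exact fun x hx => involutive (ne_of_mem_erase hx)
  · intro x hx
    have hx1 : 1 - x ≠ 0 := sub_ne_zero.2 (ne_of_mem_erase hx).symm
    have hx2 : x - 1 ≠ 0 := sub_ne_zero.2 (ne_of_mem_erase hx)
    have hx' : x / (x - 1) = -1 * x * (1 - x)⁻¹ := by field_simp; ring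
    have hsub : 1 - x / (x - 1) = (1 - x)⁻¹ := by field_simp; ring
    have hsq : χ (-1) * χ (-1) = 1 := by rw [← map_mul, neg_mul_neg, one_mul, map_one]
    rw [hsub, hx', MulChar.inv_apply', MulChar.mul_apply, map_mul, map_mul]
    linear_combination (-χ x * χ (1 - x)⁻¹ * ψ (1 - x)⁻¹) * hsq

variable [IsDomain R]

theorem sum_mulChar_mul_mulChar_sub_of_mul_ne_one {χ ψ : MulChar F R} (h : χ * ψ ≠ 1) (z : F) :
    ∑ x, χ x * ψ (z - x) = (χ * ψ) z * jacobiSum χ ψ := by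
  rcases eq_or_ne z 0 with rfl | hz
  · have (x : F) : χ x * ψ (0 - x) = ψ (-1) * (χ * ψ) x := by
      rw [zero_sub, neg_eq_neg_one_mul, map_mul, MulChar.mul_apply]
      ring
    simp only [this, ← mul_sum, MulChar.sum_eq_zero_of_ne_one h, MulChar.map_zero, mul_zero,
      zero_mul]
  · rw [sum_mulChar_mul_mulChar_sub χ ψ hz, MulChar.mul_apply]

theorem jacobiSum_mul_jacobiSum_mul {χ ψ ρ : MulChar F R} (hχψ : χ * ψ ≠ 1) (hψρ : ψ * ρ ≠ 1) :
    jacobiSum χ ψ * jacobiSum (χ * ψ) ρ = jacobiSum χ (ψ * ρ) * jacobiSum ψ ρ := by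
  calc jacobiSum χ ψ * jacobiSum (χ * ψ) ρ
      = ∑ t, ∑ x, χ x * (ψ (t - x) * ρ (1 - t)) := by
        rw [jacobiSum.eq_1 (χ * ψ), mul_sum]
        refine sum_congr rfl fun t _ => ?_
        rw [← mul_assoc, mul_comm (jacobiSum χ ψ),
          ← sum_mulChar_mul_mulChar_sub_of_mul_ne_one hχψ, sum_mul]
        exact sum_congr rfl fun x _ => mul_assoc _ _ _
    _ = ∑ x, χ x * ∑ t, ψ t * ρ (1 - x - t) := by
        rw [sum_comm]
        refine sum_congr rfl fun x _ => ?_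
        rw [mul_sum, ← Equiv.sum_comp (Equiv.addRight x)]
        refine sum_congr rfl fun t _ => ?_
        simp only [Equiv.coe_addRight, add_comm t x, add_sub_cancel_left, sub_sub]
    _ = jacobiSum χ (ψ * ρ) * jacobiSum ψ ρ := by
        simp only [sum_mulChar_mul_mulChar_sub_of_mul_ne_one hψρ, jacobiSum.eq_1 χ, sum_mul,
          mul_assoc]

section Duplication

variable [DecidableEq F]

-- Substituting `y = 2x - 1` turns `4x(1 - x)` into `1 - y²`, and `t` has `φ(t) + 1` square roots.
theorem apply_four_mul_jacobiSum_self (hF : ringChar F ≠ 2) {χ : MulChar F R} (hχ : χ ≠ 1) :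
    χ 4 * jacobiSum χ χ =
      jacobiSum χ ((quadraticChar F).ringHomComp (Int.castRingHom R)) := by
  have card_sqrts (t : F) :
      (#{y : F | y ^ 2 = t} : R) = (quadraticChar F t : R) + 1 := by
    have := quadraticChar_card_sqrts hF t
    rw [Set.toFinset_ofPred] at this
    exact_mod_cast congrArg (Int.cast : ℤ → R) this
  let double : F ≃ F := (Equiv.mulLeft₀ 2 (Ring.two_ne_zero hF)).trans (Equiv.subRight 1)
  calc χ 4 * jacobiSum χ χ
      = ∑ y, χ (1 - y ^ 2) := by
        rw [jacobiSum, mul_sum, ← double.sum_comp fun y => χ (1 - y ^ 2)]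
        refine sum_congr rfl fun x _ => ?_
        rw [← map_mul, ← map_mul]
        congr 1
        simp only [double, Equiv.trans_apply, Equiv.mulLeft₀_apply, Equiv.subRight_apply]
        ring
    _ = ∑ t, ((quadraticChar F t : R) + 1) * χ (1 - t) := by
        rw [← sum_fiberwise univ fun y : F => y ^ 2]
        refine sum_congr rfl fun t _ => ?_
        rw [← card_sqrts, ← nsmul_eq_mul]
        exact sum_eq_card_nsmul fun y hy => by rw [(mem_filter.1 hy).2]
    _ = _ := by
        have hsum : ∑ t, χ (1 - t) = 0 := by
          rw [← MulChar.sum_eq_zero_of_ne_one hχ]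
          exact (Equiv.subLeft 1).sum_comp χ
        simp only [add_mul, one_mul, sum_add_distrib, hsum, add_zero]
        rw [jacobiSum_comm]
        rfl

theorem jacobiSum_self_mul_quadraticChar (hF : ringChar F ≠ 2) {χ : MulChar F R}
    (hχ2 : χ ^ 2 ≠ 1) (hχ : χ * (quadraticChar F).ringHomComp (Int.castRingHom R) ≠ 1)
    (hJ : jacobiSum χ χ ≠ 0) :
    jacobiSum χ (χ * (quadraticChar F).ringHomComp (Int.castRingHom R)) =
      χ 4 * jacobiSum (χ ^ 2) (χ ^ 2) := by
  set φ := (quadraticChar F).ringHomComp (Int.castRingHom R)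
  have hχ1 : χ ≠ 1 := fun h => hχ2 (by rw [h, one_pow])
  have h4 : χ 4 ≠ 0 := by
    rw [show (4 : F) = 2 * 2 by norm_num, map_mul]
    have := ((isUnit_iff_ne_zero.2 (Ring.two_ne_zero hF)).map χ).ne_zero
    exact mul_ne_zero this this
  have cocycle := jacobiSum_mul_jacobiSum_mul (χ := χ) (ψ := χ) (ρ := φ) (by rwa [← sq]) hχ
  rw [← sq, ← apply_four_mul_jacobiSum_self hF hχ1, ← apply_four_mul_jacobiSum_self hF hχ2,
    MulChar.pow_apply' _ two_ne_zero] at cocycle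
  exact mul_right_cancel₀ (mul_ne_zero h4 hJ) (by linear_combination -cocycle)

end Duplication

end JacobiSum

section ClassCount

variable {F : Type*} [Field F] [Fintype F] [DecidableEq F] {α : F}

/-- The number of `x` for which `x * (1 - x)` lies in the cyclotomic class `C_i^e`; these are the
coordinates of the Jacobi sums `J(χ, χ)` with `χ ^ e = 1`. -/
def classCount (α : F) (e i : ℕ) : ℕ :=
  #{x : F | x * (1 - x) ∈ cycClass α e i}

theorem sum_map_mul_one_sub {R : Type*} [CommSemiring R]
    (hα : IsPrimitiveRoot α (Fintype.card F - 1)) {e : ℕ} (he : e ∣ Fintype.card F - 1)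
    (f : F →*₀ R) (hf : f α ^ e = 1) :
    ∑ x, f (x * (1 - x)) = ∑ i ∈ range e, classCount α e i * f α ^ i := by
  have he0 : 0 < e := Nat.pos_of_dvd_of_pos he (Nat.sub_pos_of_lt Fintype.one_lt_card)
  have expand (y : F) : f y = ∑ i ∈ range e, if y ∈ cycClass α e i then f α ^ i else 0 := by
    rcases eq_or_ne y 0 with rfl | hy
    · simp [zero_notMem_cycClass hα]
    · obtain ⟨n, rfl⟩ := exists_pow_eq_of_ne_zero hα hy
      calc f (α ^ n) = ∑ i ∈ range e, if n % e = i then f α ^ i else 0 := by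
            rw [sum_ite_eq, if_pos (mem_range.2 (Nat.mod_lt n he0)), map_pow, pow_eq_pow_mod n hf]
        _ = _ := sum_congr rfl fun i hi =>
            if_congr (pow_mem_cycClass_iff hα he (mem_range.1 hi) n).symm rfl rfl
  rw [sum_congr rfl fun x _ => expand _, sum_comm]
  refine sum_congr rfl fun i _ => ?_
  rw [← sum_filter, sum_const, nsmul_eq_mul, classCount]

theorem jacobiSum_self_eq_sum_classCount {R : Type*} [CommRing R]
    (hα : IsPrimitiveRoot α (Fintype.card F - 1)) {e : ℕ} (he : e ∣ Fintype.card F - 1)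
    (χ : MulChar F R) (hχ : χ α ^ e = 1) :
    jacobiSum χ χ = ∑ i ∈ range e, classCount α e i * χ α ^ i := by
  simp only [jacobiSum, ← map_mul]
  exact sum_map_mul_one_sub hα he χ.toMonoidWithZeroHom hχ

theorem sum_classCount (hα : IsPrimitiveRoot α (Fintype.card F - 1)) {e : ℕ}
    (he : e ∣ Fintype.card F - 1) :
    ∑ i ∈ range e, (classCount α e i : ℤ) = Fintype.card F - 2 := by
  have hone : (1 : MulChar F ℤ) α = 1 := MulChar.one_apply (isUnit_of_isPrimitiveRoot hα)
  have h := jacobiSum_self_eq_sum_classCount hα he (1 : MulChar F ℤ) (by rw [hone, one_pow])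
  simp only [hone, one_pow, mul_one] at h
  rw [← h, jacobiSum_one_one]

theorem classCount_mul_mod (p : ℕ) [Fact p.Prime] [CharP F p]
    (hα : IsPrimitiveRoot α (Fintype.card F - 1)) {e i : ℕ} (he : e ∣ Fintype.card F - 1)
    (hpe : p.Coprime e) (hi : i < e) : classCount α e (p * i % e) = classCount α e i := by
  refine (card_bijective (frobenius F p) (bijective_frobenius F p) fun x => ?_).symm
  have hfrob : frobenius F p x * (1 - frobenius F p x) = (x * (1 - x)) ^ p := by
    rw [← frobenius_def, map_mul, map_sub, map_one]
  rw [mem_filter_univ, mem_filter_univ, hfrob]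
  rcases eq_or_ne (x * (1 - x)) 0 with h0 | h0
  · simp [h0, zero_pow (Fact.out : p.Prime).ne_zero, zero_notMem_cycClass hα]
  · obtain ⟨n, hn⟩ := exists_pow_eq_of_ne_zero hα h0
    have hmod : p * i % e < e := Nat.mod_lt _ (Nat.zero_lt_of_lt hi)
    rw [← hn, ← pow_mul, pow_mem_cycClass_iff hα he hi, pow_mem_cycClass_iff hα he hmod,
      mul_comm n p]
    constructor
    · rintro rfl
      exact (Nat.mul_mod_mod p n e).symm
    · intro h
      exact Nat.mod_eq_of_lt hi ▸ Nat.ModEq.cancel_left_of_coprime hpe.symm h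

-- The involution `x ↦ 1 - x` fixes only `1/2`, where `x * (1 - x) = 1/4`.
theorem even_classCount {e i : ℕ} (hi : (4 : F)⁻¹ ∉ cycClass α e i) :
    Even (classCount α e i) := by
  rw [← ZMod.natCast_eq_zero_iff_even, classCount, card_eq_sum_ones, Nat.cast_sum]
  refine sum_involution (fun x _ => 1 - x) ?_ ?_ ?_ ?_
  · exact fun _ _ => by decide
  · intro x hx _ hfix
    have hx2 : x = 2⁻¹ := eq_inv_of_mul_eq_one_left (by linear_combination -hfix)
    refine hi ?_
    have h4 : (4 : F)⁻¹ = x * (1 - x) := by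
      rw [hfix, hx2, ← mul_inv]
      norm_num
    rw [h4]
    exact (mem_filter.1 hx).2
  · intro x hx
    rw [mem_filter_univ, sub_sub_cancel, mul_comm]
    exact (mem_filter.1 hx).2
  · exact fun x _ => sub_sub_cancel 1 x

end ClassCount

section OcticJacobiSum

variable {F R : Type*} [Field F] [Fintype F] [DecidableEq F] {α : F}

/-- The coefficient of `1` in `J(χ, χ) = octicRe α + octicIm α * √-2`, for `χ` of order `8` and
characteristic `3` modulo `8`. -/
def octicRe (α : F) : ℤ := classCount α 8 0 - classCount α 8 4

/-- The coefficient of `√-2 = χ α + χ α ^ 3` in `J(χ, χ)`, for `χ` of order `8` and characteristic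
`3` modulo `8`. -/
def octicIm (α : F) : ℤ := classCount α 8 1 - classCount α 8 5

/-- The Jacobi sum `J(ψ, ψ)` of a character `ψ` of order `4`, which is an integer in characteristic
`3` modulo `8`. -/
def quarticRe (α : F) : ℤ := classCount α 8 0 + classCount α 8 4 - 2 * classCount α 8 2

variable {p : ℕ} [Fact p.Prime] [CharP F p]

theorem classCount_eight_of_mod_eight (hp8 : p % 8 = 3)
    (hα : IsPrimitiveRoot α (Fintype.card F - 1)) (h8 : 8 ∣ Fintype.card F - 1) :
    classCount α 8 3 = classCount α 8 1 ∧ classCount α 8 6 = classCount α 8 2 ∧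
      classCount α 8 7 = classCount α 8 5 := by
  have hcop : p.Coprime 8 :=
    Nat.Coprime.pow_right 3 (Nat.coprime_two_right.2 (Nat.odd_iff.2 (by omega)))
  have hfrob {i j : ℕ} (hi : i < 8) (hij : p * i % 8 = j) : classCount α 8 j = classCount α 8 i :=
    hij ▸ classCount_mul_mod p hα h8 hcop hi
  exact ⟨hfrob (by norm_num) (by omega), hfrob (by norm_num) (by omega),
    hfrob (by norm_num) (by omega)⟩

theorem sum_map_mul_one_sub_of_pow_four_eq_neg_one [CommRing R] (hp8 : p % 8 = 3)
    (hα : IsPrimitiveRoot α (Fintype.card F - 1)) (h8 : 8 ∣ Fintype.card F - 1)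
    (f : F →*₀ R) (hf : f α ^ 4 = -1) :
    ∑ x, f (x * (1 - x)) = octicRe α + octicIm α * (f α + f α ^ 3) := by
  obtain ⟨h3, h6, h7⟩ := classCount_eight_of_mod_eight hp8 hα h8
  rw [sum_map_mul_one_sub hα h8 f (by linear_combination (f α ^ 4 - 1) * hf)]
  simp only [sum_range_succ, sum_range_zero, h3, h6, h7, octicRe, octicIm]
  push_cast
  linear_combination (classCount α 8 4 + classCount α 8 5 * f α + classCount α 8 2 * f α ^ 2
    + classCount α 8 5 * f α ^ 3) * hf

theorem jacobiSum_self_of_pow_four_eq_neg_one [CommRing R] (hp8 : p % 8 = 3)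
    (hα : IsPrimitiveRoot α (Fintype.card F - 1)) (h8 : 8 ∣ Fintype.card F - 1)
    (χ : MulChar F R) (hχ : χ α ^ 4 = -1) :
    jacobiSum χ χ = octicRe α + octicIm α * (χ α + χ α ^ 3) := by
  simp only [jacobiSum, ← map_mul]
  exact sum_map_mul_one_sub_of_pow_four_eq_neg_one hp8 hα h8 χ.toMonoidWithZeroHom hχ

theorem jacobiSum_self_of_sq_eq_neg_one [CommRing R] (hp8 : p % 8 = 3)
    (hα : IsPrimitiveRoot α (Fintype.card F - 1)) (h8 : 8 ∣ Fintype.card F - 1)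
    (χ : MulChar F R) (hχ : χ α ^ 2 = -1) : jacobiSum χ χ = quarticRe α := by
  obtain ⟨h3, h6, h7⟩ := classCount_eight_of_mod_eight hp8 hα h8
  rw [jacobiSum_self_eq_sum_classCount hα h8 χ
    (by linear_combination (χ α ^ 4 + 1) * (χ α ^ 2 - 1) * hχ)]
  simp only [sum_range_succ, sum_range_zero, h3, h6, h7, quarticRe]
  push_cast
  linear_combination (classCount α 8 2 * (χ α ^ 4 - χ α ^ 2 + 2) + classCount α 8 1 * χ α
    + classCount α 8 4 * (χ α ^ 2 - 1) + classCount α 8 5 * χ α ^ 5) * hχ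

theorem four_inv_notMem_cycClass [CommRing R] [Nontrivial R] (hp8 : p % 8 = 3)
    (hα : IsPrimitiveRoot α (Fintype.card F - 1)) {χ : MulChar F R} (hχ : orderOf χ = 8) {i : ℕ}
    (hi0 : i ≠ 0) (hi : i < 8) : (4 : F)⁻¹ ∉ cycClass α 8 i := by
  have hinv : χ 4⁻¹ = 1 := by
    rw [← MulChar.inv_apply']
    exact mulChar_four_eq_one hp8 (by rw [inv_pow, ← hχ, pow_orderOf_eq_one, inv_one])
  have hroot : IsPrimitiveRoot (χ α) 8 := hχ ▸ isPrimitiveRoot_mulChar_apply hα χ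
  rw [← hχ, mem_cycClass_iff_mulChar hα χ (hχ ▸ hi), hinv]
  exact (hroot.pow_ne_one_of_pos_of_lt hi0 hi).symm

theorem octicRe_quarticRe_emod_four (hp8 : p % 8 = 3)
    (hα : IsPrimitiveRoot α (Fintype.card F - 1)) (hF : Fintype.card F % 16 = 9) :
    octicRe α % 4 = 3 ∧ quarticRe α % 4 = 3 := by
  have h8 : 8 ∣ Fintype.card F - 1 := by omega
  obtain ⟨χ, hχ⟩ :=
    MulChar.exists_mulChar_orderOf F h8 (Complex.isPrimitiveRoot_exp 8 (by norm_num))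
  have heven {i : ℕ} (hi0 : i ≠ 0) (hi : i < 8) : Even (classCount α 8 i) :=
    even_classCount (four_inv_notMem_cycClass hp8 hα hχ hi0 hi)
  obtain ⟨h3, h6, h7⟩ := classCount_eight_of_mod_eight hp8 hα h8
  have htotal := sum_classCount hα h8
  simp only [sum_range_succ, sum_range_zero, h3, h6, h7] at htotal
  have h1 := heven (i := 1) (by norm_num) (by norm_num)
  have h2 := heven (i := 2) (by norm_num) (by norm_num)
  have h4 := heven (i := 4) (by norm_num) (by norm_num)
  have h5 := heven (i := 5) (by norm_num) (by norm_num)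
  rw [Nat.even_iff] at h1 h2 h4 h5
  rw [octicRe, quarticRe]
  omega

end OcticJacobiSum

section OcticDetermination

theorem jacobiSum_self_mul_jacobiSum_inv {F K : Type*} [Field F] [Fintype F] [Field K] [CharZero K]
    {χ : MulChar F K} (hχ : χ ^ 2 ≠ 1) : jacobiSum χ χ * jacobiSum χ⁻¹ χ⁻¹ = Fintype.card F := by
  have hχ1 : χ ≠ 1 := fun h => hχ (by rw [h, one_pow])
  refine jacobiSum_mul_jacobiSum_inv ?_ hχ1 hχ1 (by rwa [← sq])
  rw [ringChar.eq_zero]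
  exact (CharP.ringChar_ne_zero_of_finite F).symm

variable {F : Type*} [Field F] [Fintype F] [DecidableEq F] {α : F}
  {p : ℕ} [Fact p.Prime] [CharP F p]

theorem octicRe_sq_add_two_mul_octicIm_sq (hp8 : p % 8 = 3)
    (hα : IsPrimitiveRoot α (Fintype.card F - 1)) (h8 : 8 ∣ Fintype.card F - 1) :
    octicRe α ^ 2 + 2 * octicIm α ^ 2 = Fintype.card F := by
  obtain ⟨χ, hχ⟩ :=
    MulChar.exists_mulChar_orderOf F h8 (Complex.isPrimitiveRoot_exp 8 (by norm_num))
  have hroot : IsPrimitiveRoot (χ α) 8 := hχ ▸ isPrimitiveRoot_mulChar_apply hα χ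
  have h4 : χ α ^ 4 = -1 := (hroot.pow (by norm_num) rfl).eq_neg_one_of_two_right
  have hinv : χ⁻¹ α = -χ α ^ 3 := by
    rw [MulChar.inv_apply_eq_inv']
    exact inv_eq_of_mul_eq_one_right (by linear_combination -h4)
  have hnorm := jacobiSum_self_mul_jacobiSum_inv (χ := χ)
    (pow_ne_one_of_lt_orderOf two_ne_zero (by omega))
  have hJinv : jacobiSum χ⁻¹ χ⁻¹ = octicRe α - octicIm α * (χ α + χ α ^ 3) := by
    have hinv4 : χ⁻¹ α ^ 4 = -1 := by
      rw [hinv]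
      linear_combination (χ α ^ 8 - χ α ^ 4 + 1) * h4
    rw [jacobiSum_self_of_pow_four_eq_neg_one hp8 hα h8 χ⁻¹ hinv4, hinv]
    linear_combination (-octicIm α * χ α * (χ α ^ 4 - 1)) * h4
  have hcast : (octicRe α ^ 2 + 2 * octicIm α ^ 2 : ℂ) = Fintype.card F := by
    rw [← hnorm, jacobiSum_self_of_pow_four_eq_neg_one hp8 hα h8 χ h4, hJinv]
    linear_combination (octicIm α ^ 2 * (χ α ^ 2 + 2)) * h4
  exact_mod_cast hcast

theorem quarticRe_sq (hp8 : p % 8 = 3) (hα : IsPrimitiveRoot α (Fintype.card F - 1))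
    (h8 : 8 ∣ Fintype.card F - 1) : quarticRe α ^ 2 = Fintype.card F := by
  obtain ⟨χ, hχ⟩ := MulChar.exists_mulChar_orderOf F ((by norm_num : 4 ∣ 8).trans h8)
    (Complex.isPrimitiveRoot_exp 4 (by norm_num))
  have hroot : IsPrimitiveRoot (χ α) 4 := hχ ▸ isPrimitiveRoot_mulChar_apply hα χ
  have h2 : χ α ^ 2 = -1 := (hroot.pow (by norm_num) rfl).eq_neg_one_of_two_right
  have hinv2 : χ⁻¹ α ^ 2 = -1 := by rw [MulChar.inv_apply_eq_inv', inv_pow, h2, inv_neg_one]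
  have hnorm := jacobiSum_self_mul_jacobiSum_inv (χ := χ)
    (pow_ne_one_of_lt_orderOf two_ne_zero (by omega))
  rw [jacobiSum_self_of_sq_eq_neg_one hp8 hα h8 χ h2,
    jacobiSum_self_of_sq_eq_neg_one hp8 hα h8 χ⁻¹ hinv2, ← sq] at hnorm
  exact_mod_cast hnorm

theorem not_dvd_octicRe (hp8 : p % 8 = 3) (hα : IsPrimitiveRoot α (Fintype.card F - 1)) {t : ℕ}
    (hF : Fintype.card F = p ^ (2 * t)) (h8 : 8 ∣ Fintype.card F - 1) :
    ¬ (p : ℤ) ∣ octicRe α := by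
  have hp : p.Prime := Fact.out
  have hp2 : p ≠ 2 := by omega
  have hpZ : Prime (p : ℤ) := Nat.prime_iff_prime_int.1 hp
  have hq : 1 < Fintype.card F := Fintype.one_lt_card
  obtain ⟨e, he⟩ := h8
  have he0 : e ≠ 0 := by omega
  intro hRe
  have hIm : (p : ℤ) ∣ octicIm α := by
    have hnorm := octicRe_sq_add_two_mul_octicIm_sq hp8 hα ⟨e, he⟩
    have hpq : (p : ℤ) ∣ Fintype.card F := by
      exact_mod_cast (CharP.cast_eq_zero_iff F p _).1 (Nat.cast_card_eq_zero F)
    have h2 : ¬ (p : ℤ) ∣ 2 := by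
      exact_mod_cast (Nat.prime_dvd_prime_iff_eq hp Nat.prime_two).not.2 hp2
    have hdvd : (p : ℤ) ∣ 2 * octicIm α ^ 2 :=
      (dvd_add_right (dvd_pow hRe two_ne_zero)).1 (hnorm ▸ hpq)
    exact hpZ.dvd_of_dvd_pow ((hpZ.dvd_mul.1 hdvd).resolve_left h2)
  have hw : (α ^ (7 * e)) ^ 4 = -1 := by
    rw [← pow_mul, show 7 * e * 4 = e * 4 * 7 by ring, pow_mul,
      pow_card_sub_one_div_two_eq_neg_one hα (n := e * 4) (by omega)]
    norm_num
  have hzero : ∑ x : F, x ^ (7 * e) * (1 - x) ^ (7 * e) = 0 := by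
    have h := sum_map_mul_one_sub_of_pow_four_eq_neg_one hp8 hα ⟨e, he⟩
      (powMonoidWithZeroHom (M₀ := F) (n := 7 * e) (by omega)) hw
    simp only [powMonoidWithZeroHom_apply, mul_pow] at h
    rw [h, (CharP.intCast_eq_zero_iff F p _).2 hRe, (CharP.intCast_eq_zero_iff F p _).2 hIm,
      zero_mul, add_zero]
  rw [sum_pow_mul_one_sub_pow (k := e) (by omega) (by omega) (by omega), neg_eq_zero,
    mul_eq_zero, CharP.cast_eq_zero_iff F p] at hzero
  exact hzero.elim (pow_ne_zero e (neg_ne_zero.2 one_ne_zero))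
    (not_dvd_choose_seven_mul hp hp8 t (by omega))

theorem octicRe_eq_neg_quarticRe_eq_neg (hp8 : p % 8 = 3)
    (hα : IsPrimitiveRoot α (Fintype.card F - 1)) {t : ℕ} (hF : Fintype.card F = p ^ (2 * t))
    (hF16 : Fintype.card F % 16 = 9) {x a b : ℤ} (hx : x ^ 2 = Fintype.card F)
    (hab : a ^ 2 + 2 * b ^ 2 = Fintype.card F) (ha : a % 4 = 1) (hx4 : x % 4 = 1)
    (hpa : ¬ (p : ℤ) ∣ a) : octicRe α = -a ∧ quarticRe α = -x := by
  have h8 : 8 ∣ Fintype.card F - 1 := by omega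
  obtain ⟨hRe4, hquartic4⟩ := octicRe_quarticRe_emod_four hp8 hα hF16
  have ht : 2 * t ≠ 0 := by
    intro ht
    rw [ht, pow_zero] at hF
    omega
  have hcast : (Fintype.card F : ℤ) = (p : ℤ) ^ (2 * t) := by exact_mod_cast hF
  constructor
  · have hRe := eq_or_eq_neg_of_sq_add_mul_sq_eq_prime_pow Fact.out (by omega) ht one_lt_two
      ((octicRe_sq_add_two_mul_octicIm_sq hp8 hα h8).trans hcast) (hab.trans hcast)
      (not_dvd_octicRe hp8 hα hF h8) hpa
    omega
  · have hquartic := sq_eq_sq_iff_eq_or_eq_neg.1 ((quarticRe_sq hp8 hα h8).trans hx.symm)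
    omega

end OcticDetermination

section OcticCharacter

theorem pow_four_eq_quadraticChar {F R : Type*} [Field F] [Fintype F] [DecidableEq F] [CommRing R]
    [IsDomain R] {χ : MulChar F R} (hF : ringChar F ≠ 2) (hχ : orderOf χ = 8) :
    χ ^ 4 = (quadraticChar F).ringHomComp (Int.castRingHom R) := by
  refine eq_quadraticChar_of_sq_eq_one hF ?_ (pow_ne_one_of_lt_orderOf (by norm_num) (by omega))
  rw [← pow_mul, show 4 * 2 = 8 from rfl, ← hχ, pow_orderOf_eq_one]

theorem jacobiSum_pow_three {F R : Type*} [Field F] [Fintype F] [CommRing R] [IsDomain R]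
    {χ : MulChar F R} (hF : ringChar F ≠ 2) (hχ : orderOf χ = 8) :
    jacobiSum χ (χ ^ 3) = χ (-1) * χ 4 * jacobiSum χ χ := by
  classical
  have hχ1 : χ ≠ 1 := fun h => by simp [h] at hχ
  have hχ8 : χ ^ 8 = 1 := hχ ▸ pow_orderOf_eq_one χ
  have hquad := pow_four_eq_quadraticChar hF hχ
  have hinv : χ ^ 3 = (χ * χ ^ 4)⁻¹ := by rw [eq_inv_iff_mul_eq_one, ← hχ8]; group
  rw [hinv, jacobiSum_mul_inv, hquad, ← apply_four_mul_jacobiSum_self hF hχ1, mul_assoc]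

theorem jacobiSum_pow_five {F K : Type*} [Field F] [Fintype F] [Field K] [CharZero K]
    {χ : MulChar F K} (hF : ringChar F ≠ 2) (hχ : orderOf χ = 8) :
    jacobiSum χ (χ ^ 5) = χ 4 * jacobiSum (χ ^ 2) (χ ^ 2) := by
  classical
  have pow_ne_one {k : ℕ} (hk0 : k ≠ 0) (hk : k < 8) : χ ^ k ≠ 1 :=
    pow_ne_one_of_lt_orderOf hk0 (hχ ▸ hk)
  have hquad := pow_four_eq_quadraticChar hF hχ
  have hJ : jacobiSum χ χ ≠ 0 := by
    refine left_ne_zero_of_mul (b := jacobiSum χ⁻¹ χ⁻¹) ?_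
    rw [jacobiSum_self_mul_jacobiSum_inv (pow_ne_one (by norm_num) (by norm_num))]
    exact Nat.cast_ne_zero.2 Fintype.card_ne_zero
  rw [pow_succ' χ 4, hquad]
  refine jacobiSum_self_mul_quadraticChar hF (pow_ne_one (by norm_num) (by norm_num)) ?_ hJ
  rw [← hquad, ← pow_succ']
  exact pow_ne_one (by norm_num) (by norm_num)

theorem mulChar_apply_pow_orderOf {M R : Type*} [CommMonoid M] [CommMonoidWithZero R]
    {χ : MulChar M R} {x : M} (hx : IsUnit x) : χ x ^ orderOf χ = 1 := by
  rw [← hx.unit_spec, ← MulChar.pow_apply_coe, pow_orderOf_eq_one, MulChar.one_apply_coe]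

theorem orderOf_pow_eq_eight_of_odd {M : Type*} [Monoid M] {x : M} {k : ℕ} (hx : orderOf x = 8)
    (hk : Odd k) : orderOf (x ^ k) = 8 := by
  have hcop : Nat.Coprime (2 ^ 3) k := Nat.Coprime.pow_left 3 hk.coprime_two_left
  rw [Nat.Coprime.orderOf_pow (by rwa [hx]), hx]

section JacobiTable

variable {F R : Type*} [Field F] [Fintype F] [CommRing R] [IsDomain R] {χ : MulChar F R}

theorem jacobiSum_pow_pow_of_add_eq_orderOf {j k : ℕ} (hj : j ≠ 0) (hk : k ≠ 0)
    (hjk : j + k = orderOf χ) : jacobiSum (χ ^ j) (χ ^ k) = -χ (-1) ^ j := by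
  have hinv : χ ^ k = (χ ^ j)⁻¹ := by
    rw [eq_inv_iff_mul_eq_one, ← pow_add, add_comm, hjk, pow_orderOf_eq_one]
  rw [hinv, jacobiSum_nontrivial_inv (pow_ne_one_of_lt_orderOf hj (by omega)),
    MulChar.pow_apply' χ hj]

variable {p : ℕ} [Fact p.Prime] [CharP F p] [DecidableEq F] {α : F}

theorem jacobiSum_self_add_jacobiSum_pow_five_self (hp8 : p % 8 = 3)
    (hα : IsPrimitiveRoot α (Fintype.card F - 1)) (h8 : 8 ∣ Fintype.card F - 1)
    (hχ : orderOf χ = 8) : jacobiSum χ χ + jacobiSum (χ ^ 5) (χ ^ 5) = 2 * octicRe α := by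
  have hroot : IsPrimitiveRoot (χ α) 8 := hχ ▸ isPrimitiveRoot_mulChar_apply hα χ
  have h4 : χ α ^ 4 = -1 := (hroot.pow (by norm_num) rfl).eq_neg_one_of_two_right
  have h4' : (χ ^ 5) α ^ 4 = -1 := by
    rw [MulChar.pow_apply' χ (by norm_num), pow_right_comm, h4]
    norm_num
  rw [jacobiSum_self_of_pow_four_eq_neg_one hp8 hα h8 _ h4,
    jacobiSum_self_of_pow_four_eq_neg_one hp8 hα h8 _ h4', MulChar.pow_apply' χ (by norm_num)]
  linear_combination octicIm α * (χ α + χ α ^ 3 * (χ α ^ 8 - χ α ^ 4 + 1)) * h4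

theorem jacobiSum_pow_three_add_jacobiSum_pow_five_pow_seven (hp8 : p % 8 = 3)
    (hα : IsPrimitiveRoot α (Fintype.card F - 1)) (h8 : 8 ∣ Fintype.card F - 1)
    (hχ : orderOf χ = 8) (hneg : χ (-1) = -1) :
    jacobiSum χ (χ ^ 3) + jacobiSum (χ ^ 5) (χ ^ 7) = -(2 * octicRe α) := by
  have hF : ringChar F ≠ 2 := by
    rw [ringChar.eq F p]
    omega
  have hχ1 : χ ^ 8 = 1 := hχ ▸ pow_orderOf_eq_one χ
  have hJ {k : ℕ} (hk : Odd k) :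
      jacobiSum (χ ^ k) ((χ ^ k) ^ 3) = -jacobiSum (χ ^ k) (χ ^ k) := by
    have hχk := orderOf_pow_eq_eight_of_odd hχ hk
    rw [jacobiSum_pow_three hF hχk, MulChar.pow_apply' χ hk.pos.ne', hneg, hk.neg_one_pow,
      mulChar_four_eq_one hp8 (hχk ▸ pow_orderOf_eq_one (χ ^ k)), mul_one, neg_one_mul]
  have h57 : χ ^ 7 = (χ ^ 5) ^ 3 := by rw [← pow_mul, pow_eq_pow_mod (5 * 3) hχ1]
  have hJ1 := hJ odd_one
  rw [pow_one] at hJ1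
  rw [h57, hJ1, hJ (by decide), ← neg_add,
    jacobiSum_self_add_jacobiSum_pow_five_self hp8 hα h8 hχ]

theorem sum_add_pow_five_mul_pow_three_add_pow_seven_sub (hp8 : p % 8 = 3)
    (hα : IsPrimitiveRoot α (Fintype.card F - 1)) (h8 : 8 ∣ Fintype.card F - 1)
    (hχ : orderOf χ = 8) (hneg : χ (-1) = -1) {z : F} (hz : z ≠ 0) :
    ∑ x, (χ x + χ x ^ 5) * (χ (x - z) ^ 3 + χ (x - z) ^ 7) = 2 * (octicRe α * χ z ^ 4 - 1) := by
  have hz8 : χ z ^ 8 = 1 := hχ ▸ mulChar_apply_pow_orderOf hz.isUnit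
  have hJ := jacobiSum_pow_three_add_jacobiSum_pow_five_pow_seven hp8 hα h8 hχ hneg
  have hJ17 := jacobiSum_pow_pow_of_add_eq_orderOf one_ne_zero (by norm_num : 7 ≠ 0) hχ.symm
  have hJ53 := jacobiSum_pow_pow_of_add_eq_orderOf (by norm_num : 5 ≠ 0) three_ne_zero hχ.symm
  have corr {j k : ℕ} (hj : j ≠ 0) (hk : k ≠ 0) := sum_pow_mul_pow_sub χ hj hk hz
  have expand : ∑ x, (χ x + χ x ^ 5) * (χ (x - z) ^ 3 + χ (x - z) ^ 7) =
      ∑ x, χ x ^ 1 * χ (x - z) ^ 3 + ∑ x, χ x ^ 1 * χ (x - z) ^ 7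
        + ∑ x, χ x ^ 5 * χ (x - z) ^ 3 + ∑ x, χ x ^ 5 * χ (x - z) ^ 7 := by
    simp only [← sum_add_distrib]
    exact sum_congr rfl fun x _ => by ring
  rw [expand]
  simp only [corr, ne_eq, OfNat.ofNat_ne_zero, one_ne_zero, not_false_eq_true, hJ17, hJ53]
  simp only [pow_one, hneg, Nat.reduceAdd]
  linear_combination -χ z ^ 4 * hJ - (2 + χ z ^ 4 * jacobiSum (χ ^ 5) (χ ^ 7)) * hz8

variable {K : Type*} [Field K] [CharZero K] {χ : MulChar F K}

theorem jacobiSum_pow_five_eq_quarticRe (hp8 : p % 8 = 3)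
    (hα : IsPrimitiveRoot α (Fintype.card F - 1)) (h8 : 8 ∣ Fintype.card F - 1)
    (hχ : orderOf χ = 8) : jacobiSum χ (χ ^ 5) = quarticRe α := by
  have hF : ringChar F ≠ 2 := by
    rw [ringChar.eq F p]
    omega
  have hroot : IsPrimitiveRoot (χ α) 8 := hχ ▸ isPrimitiveRoot_mulChar_apply hα χ
  have h2 : (χ ^ 2) α ^ 2 = -1 := by
    rw [MulChar.pow_apply' _ two_ne_zero, ← pow_mul]
    exact (hroot.pow (by norm_num) rfl).eq_neg_one_of_two_right
  rw [jacobiSum_pow_five hF hχ, mulChar_four_eq_one hp8 (hχ ▸ pow_orderOf_eq_one χ), one_mul,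
    jacobiSum_self_of_sq_eq_neg_one hp8 hα h8 _ h2]

theorem sum_add_pow_five_mul_sub (hp8 : p % 8 = 3)
    (hα : IsPrimitiveRoot α (Fintype.card F - 1)) (h8 : 8 ∣ Fintype.card F - 1)
    (hχ : orderOf χ = 8) (hneg : χ (-1) = -1) {z : F} (hz : z ≠ 0) :
    ∑ x, (χ x + χ x ^ 5) * (χ (x - z) + χ (x - z) ^ 5) =
      -2 * (octicRe α * χ z ^ 2 + quarticRe α * χ z ^ 6) := by
  have hz8 : χ z ^ 8 = 1 := hχ ▸ mulChar_apply_pow_orderOf hz.isUnit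
  have hJ := jacobiSum_self_add_jacobiSum_pow_five_self hp8 hα h8 hχ
  have hJ15 := jacobiSum_pow_five_eq_quarticRe hp8 hα h8 hχ
  have corr {j k : ℕ} (hj : j ≠ 0) (hk : k ≠ 0) := sum_pow_mul_pow_sub χ hj hk hz
  have expand : ∑ x, (χ x + χ x ^ 5) * (χ (x - z) + χ (x - z) ^ 5) =
      ∑ x, χ x ^ 1 * χ (x - z) ^ 1 + ∑ x, χ x ^ 1 * χ (x - z) ^ 5
        + ∑ x, χ x ^ 5 * χ (x - z) ^ 1 + ∑ x, χ x ^ 5 * χ (x - z) ^ 5 := by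
    simp only [← sum_add_distrib]
    exact sum_congr rfl fun x _ => by ring
  rw [expand]
  simp only [corr, ne_eq, OfNat.ofNat_ne_zero, one_ne_zero, not_false_eq_true]
  simp only [pow_one, hneg, jacobiSum_comm (χ ^ 5) χ, hJ15, Nat.reduceAdd]
  linear_combination -χ z ^ 2 * hJ - χ z ^ 2 * jacobiSum (χ ^ 5) (χ ^ 5) * hz8

end JacobiTable

section OcticSequence

variable {F K : Type*} [Field F] [Field K]

/-- The union `C_0^8 ∪ C_1^8 ∪ C_2^8 ∪ C_5^8` of cyclotomic classes, for which the skew partial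
difference set property is to be shown. -/
def octicSet [Fintype F] [DecidableEq F] (α : F) : Finset F :=
  cycClass α 8 0 ∪ cycClass α 8 1 ∪ cycClass α 8 2 ∪ cycClass α 8 5

/-- The part of the signed indicator of `octicSet α` that is even when
`χ (-1) = -1`, in terms of a character `χ` of order `8`. -/
def octicEven (α : F) (χ : MulChar F K) (x : F) : K :=
  -(χ α ^ 2 / 2) * (χ x ^ 2 - χ x ^ 6)

/-- The part of the signed indicator of `octicSet α` that is odd when
`χ (-1) = -1`, in terms of a character `χ` of order `8`. -/
def octicOdd (α : F) (χ : MulChar F K) (x : F) : K :=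
  (1 - χ α ^ 2) / 4 * (χ x + χ x ^ 5) + (1 + χ α ^ 2) / 4 * (χ x ^ 3 + χ x ^ 7)

theorem even_octicEven (α : F) {χ : MulChar F K} (hχ : χ (-1) = -1) :
    Function.Even (octicEven α χ) := by
  intro x
  rw [octicEven, octicEven, neg_eq_neg_one_mul x, map_mul, hχ]
  ring

theorem odd_octicOdd (α : F) {χ : MulChar F K} (hχ : χ (-1) = -1) :
    Function.Odd (octicOdd α χ) := by
  intro x
  rw [octicOdd, octicOdd, neg_eq_neg_one_mul x, map_mul, hχ]
  ring

theorem sum_octicEven [Fintype F] (α : F) {χ : MulChar F K} (hχ : orderOf χ = 8) :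
    ∑ x, octicEven α χ x = 0 := by
  have hsum {k : ℕ} (hk0 : k ≠ 0) (hk : k < 8) : ∑ x, χ x ^ k = 0 := by
    simp only [← MulChar.pow_apply' χ hk0]
    exact MulChar.sum_eq_zero_of_ne_one (pow_ne_one_of_lt_orderOf hk0 (hχ ▸ hk))
  simp only [octicEven, ← mul_sum, sum_sub_distrib]
  rw [hsum (by norm_num) (by norm_num), hsum (by norm_num) (by norm_num), sub_zero, mul_zero]

variable [CharZero K] [Fintype F] {α : F} {χ : MulChar F K}

theorem signIndicator_octic [DecidableEq F]
    (hα : IsPrimitiveRoot α (Fintype.card F - 1)) (hχ : orderOf χ = 8) (x : F) :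
    (signIndicator (octicSet α) x : K) = octicEven α χ x + octicOdd α χ x := by
  rcases eq_or_ne x 0 with rfl | hx
  · simp [signIndicator, octicEven, octicOdd, MulChar.map_zero]
  · obtain ⟨n, rfl⟩ := exists_pow_eq_of_ne_zero hα hx
    have hroot : IsPrimitiveRoot (χ α) 8 := hχ ▸ isPrimitiveRoot_mulChar_apply hα χ
    have h4 : χ α ^ 4 = -1 := (hroot.pow (by norm_num) rfl).eq_neg_one_of_two_right
    have h8 : 8 ∣ Fintype.card F - 1 := hroot.dvd_of_pow_eq_one _ <| by
      rw [← map_pow, hα.pow_eq_one, map_one]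
    simp only [signIndicator, octicSet, hx, if_false, mem_union, octicEven, octicOdd, map_pow χ α,
      pow_eq_pow_mod n hroot.pow_eq_one, pow_mem_cycClass_iff hα h8 (show 0 < 8 by norm_num),
      pow_mem_cycClass_iff hα h8 (show 1 < 8 by norm_num),
      pow_mem_cycClass_iff hα h8 (show 2 < 8 by norm_num),
      pow_mem_cycClass_iff hα h8 (show 5 < 8 by norm_num)]
    have hlt := Nat.mod_lt n (show 8 > 0 by norm_num)
    generalize n % 8 = r at hlt
    interval_cases r <;> norm_num <;> grind

variable {p : ℕ} [Fact p.Prime] [CharP F p] [DecidableEq F]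

theorem sum_octicEven_mul_octicEven_sub (hp8 : p % 8 = 3)
    (hα : IsPrimitiveRoot α (Fintype.card F - 1)) (h8 : 8 ∣ Fintype.card F - 1)
    (hχ : orderOf χ = 8) (hneg : χ (-1) = -1) {z : F} (hz : z ≠ 0) :
    ∑ x, octicEven α χ x * octicEven α χ (x - z) = -(1 + quarticRe α * χ z ^ 4) / 2 := by
  have hroot : IsPrimitiveRoot (χ α) 8 := hχ ▸ isPrimitiveRoot_mulChar_apply hα χ
  have h4 : χ α ^ 4 = -1 := (hroot.pow (by norm_num) rfl).eq_neg_one_of_two_right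
  have hz8 : χ z ^ 8 = 1 := hχ ▸ mulChar_apply_pow_orderOf hz.isUnit
  have hJ22 : jacobiSum (χ ^ 2) (χ ^ 2) = (quarticRe α : K) :=
    jacobiSum_self_of_sq_eq_neg_one hp8 hα h8 _ <| by
      rw [MulChar.pow_apply' χ (by norm_num)]
      linear_combination h4
  have hJ66 : jacobiSum (χ ^ 6) (χ ^ 6) = (quarticRe α : K) :=
    jacobiSum_self_of_sq_eq_neg_one hp8 hα h8 _ <| by
      rw [MulChar.pow_apply' χ (by norm_num)]
      linear_combination (χ α ^ 8 - χ α ^ 4 + 1) * h4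
  have hJ26 : jacobiSum (χ ^ 2) (χ ^ 6) = -1 := by
    rw [jacobiSum_pow_pow_of_add_eq_orderOf (by norm_num) (by norm_num) hχ.symm, hneg]
    norm_num
  have corr {j k : ℕ} (hj : j ≠ 0) (hk : k ≠ 0) := sum_pow_mul_pow_sub χ hj hk hz
  have expand : ∑ x, octicEven α χ x * octicEven α χ (x - z) = (χ α ^ 2 / 2) ^ 2 *
      (∑ x, χ x ^ 2 * χ (x - z) ^ 2 - ∑ x, χ x ^ 2 * χ (x - z) ^ 6
        - ∑ x, χ x ^ 6 * χ (x - z) ^ 2 + ∑ x, χ x ^ 6 * χ (x - z) ^ 6) := by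
    simp only [octicEven, mul_sum, ← sum_add_distrib, ← sum_sub_distrib]
    exact sum_congr rfl fun x _ => by ring
  rw [expand]
  simp only [corr, ne_eq, OfNat.ofNat_ne_zero, not_false_eq_true, hneg, hJ22, hJ66, hJ26,
    jacobiSum_comm (χ ^ 6) (χ ^ 2), Nat.reduceAdd]
  have hz12 : χ z ^ 12 = χ z ^ 4 := by linear_combination χ z ^ 4 * hz8
  rw [hz8, hz12]
  linear_combination (1 + quarticRe α * χ z ^ 4) / 2 * h4

theorem sum_octicOdd_mul_octicOdd_sub (hp8 : p % 8 = 3)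
    (hα : IsPrimitiveRoot α (Fintype.card F - 1)) (h8 : 8 ∣ Fintype.card F - 1)
    (hχ : orderOf χ = 8) (hneg : χ (-1) = -1) {z : F} (hz : z ≠ 0) :
    ∑ x, octicOdd α χ x * octicOdd α χ (x - z) = (octicRe α * χ z ^ 4 - 1) / 2
      + χ α ^ 2 / 4 * (octicRe α - quarticRe α) * (χ z ^ 2 - χ z ^ 6) := by
  have hroot : IsPrimitiveRoot (χ α) 8 := hχ ▸ isPrimitiveRoot_mulChar_apply hα χ
  have h4 : χ α ^ 4 = -1 := (hroot.pow (by norm_num) rfl).eq_neg_one_of_two_right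
  have cube (y : F) : (χ ^ 3) y = χ y ^ 3 := MulChar.pow_apply' χ three_ne_zero y
  have cube_pow (y : F) : (χ y ^ 3) ^ 3 = χ y ∧ (χ y ^ 3) ^ 5 = χ y ^ 7 ∧
      (χ y ^ 3) ^ 7 = χ y ^ 5 ∧ (χ y ^ 3) ^ 4 = χ y ^ 4 ∧ (χ y ^ 3) ^ 2 = χ y ^ 6 ∧
      (χ y ^ 3) ^ 6 = χ y ^ 2 := by
    rcases eq_or_ne y 0 with rfl | hy
    · simp [MulChar.map_zero]
    · have hy8 : χ y ^ 8 = 1 := hχ ▸ mulChar_apply_pow_orderOf hy.isUnit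
      grind
  have hχ3 : orderOf (χ ^ 3) = 8 := orderOf_pow_eq_eight_of_odd hχ (by decide)
  have hneg3 : (χ ^ 3) (-1) = -1 := by
    rw [cube, hneg]
    norm_num
  have h11 := sum_add_pow_five_mul_sub hp8 hα h8 hχ hneg hz
  have h33 := sum_add_pow_five_mul_sub hp8 hα h8 hχ3 hneg3 hz
  have h13 := sum_add_pow_five_mul_pow_three_add_pow_seven_sub hp8 hα h8 hχ hneg hz
  have h31 := sum_add_pow_five_mul_pow_three_add_pow_seven_sub hp8 hα h8 hχ3 hneg3 hz
  simp only [cube, cube_pow] at h33 h31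
  have expand : ∑ x, octicOdd α χ x * octicOdd α χ (x - z) =
      ((1 - χ α ^ 2) / 4) ^ 2 * ∑ x, (χ x + χ x ^ 5) * (χ (x - z) + χ (x - z) ^ 5)
      + (1 - χ α ^ 2) / 4 * ((1 + χ α ^ 2) / 4) *
        (∑ x, (χ x + χ x ^ 5) * (χ (x - z) ^ 3 + χ (x - z) ^ 7)
        + ∑ x, (χ x ^ 3 + χ x ^ 7) * (χ (x - z) + χ (x - z) ^ 5))
      + ((1 + χ α ^ 2) / 4) ^ 2 *
        ∑ x, (χ x ^ 3 + χ x ^ 7) * (χ (x - z) ^ 3 + χ (x - z) ^ 7) := by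
    simp only [octicOdd, mul_sum, ← sum_add_distrib]
    exact sum_congr rfl fun x _ => by ring
  rw [expand, h11, h13, h31, h33]
  generalize χ α = w at h4
  generalize χ z = c
  generalize (octicRe α : K) = A
  generalize (quarticRe α : K) = s
  grind

end OcticSequence

end OcticCharacter

section Paley

variable {F : Type*} [Field F] [Fintype F] [DecidableEq F] {α : F}

theorem orderOf_quadraticChar (hF : ringChar F ≠ 2) : orderOf (quadraticChar F) = 2 :=
  orderOf_eq_prime (quadraticChar_isQuadratic F).sq_eq_one (quadraticChar_ne_one hF)

theorem signIndicator_cycClass_two (hα : IsPrimitiveRoot α (Fintype.card F - 1))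
    (hF : ringChar F ≠ 2) (x : F) : signIndicator (cycClass α 2 0) x = quadraticChar F x := by
  have hmem : x ∈ cycClass α 2 0 ↔ quadraticChar F x = 1 := by
    simpa [orderOf_quadraticChar hF] using
      mem_cycClass_iff_mulChar hα (quadraticChar F) (i := 0) (x := x)
        (by rw [orderOf_quadraticChar hF]; norm_num)
  rcases eq_or_ne x 0 with rfl | hx
  · simp [signIndicator]
  · rcases quadraticChar_dichotomy hx with h | h <;> simp [signIndicator, hx, hmem, h]

theorem gstar_sdiff_cycClass_two (hα : IsPrimitiveRoot α (Fintype.card F - 1))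
    (h2 : 2 ∣ Fintype.card F - 1) : Gstar F \ cycClass α 2 0 = cycClass α 2 1 := by
  ext x
  rcases eq_or_ne x 0 with rfl | hx
  · simp [Gstar, zero_notMem_cycClass hα]
  · obtain ⟨n, rfl⟩ := exists_pow_eq_of_ne_zero hα hx
    simp [Gstar, hx, pow_mem_cycClass_iff hα h2]

theorem isPDS_cycClass_two (hα : IsPrimitiveRoot α (Fintype.card F - 1))
    (hF : Fintype.card F % 4 = 1) :
    IsPDS (cycClass α 2 0) (Fintype.card F) ((Fintype.card F - 1) / 2)
      ((Fintype.card F - 5) / 4) ((Fintype.card F - 1) / 4) := by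
  have hchar : ringChar F ≠ 2 := fun h => by
    have := FiniteField.even_card_of_char_two h
    omega
  have hneg : quadraticChar F (-1) = 1 :=
    (quadraticChar_one_iff_isSquare (neg_ne_zero.2 one_ne_zero)).2 <|
      FiniteField.isSquare_neg_one_iff.2 (by omega)
  have h0 := zero_notMem_cycClass hα 2 0
  have hsum : ∑ x, signIndicator (cycClass α 2 0) x = 0 := by
    simp only [signIndicator_cycClass_two hα hchar]
    exact quadraticChar_sum_zero hchar
  refine ⟨rfl, card_eq_of_sum_signIndicator_eq_zero h0 hsum,
    intDiff_eq_of_autocorrelation h0 hsum fun z hz => ?_⟩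
  have hJ : jacobiSum (quadraticChar F) (quadraticChar F) = -1 := by
    simpa [(quadraticChar_isQuadratic F).inv, hneg] using
      jacobiSum_nontrivial_inv (quadraticChar_ne_one hchar)
  have hcorr := sum_pow_mul_pow_sub (quadraticChar F) one_ne_zero one_ne_zero hz
  simp only [signIndicator_cycClass_two hα hchar]
  simp only [pow_one, hneg, hJ] at hcorr
  rw [hcorr, neg_eq_neg_one_mul z, map_mul, hneg, one_add_one_eq_two,
    quadraticChar_sq_one hz]
  ring

end Paley

section SkewPDS

variable {F : Type*} [Field F] [Fintype F] [DecidableEq F] {p : ℕ} [Fact p.Prime] [CharP F p]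
  {α : F}

theorem autocorrelation_octicSet (hp8 : p % 8 = 3) (hα : IsPrimitiveRoot α (Fintype.card F - 1))
    (h8 : 8 ∣ Fintype.card F - 1) {K : Type*} [Field K] [CharZero K] {χ : MulChar F K}
    (hχ : orderOf χ = 8) (hneg : χ (-1) = -1) (hJ : octicRe α - quarticRe α = -4) {z : F}
    (hz : z ≠ 0) :
    ∑ x, signIndicator (octicSet α) x * signIndicator (octicSet α) (x - z) =
      signIndicator (octicSet α) z + signIndicator (octicSet α) (-z) - 1
        - 2 * signIndicator (cycClass α 2 0) z := by
  have hF : ringChar F ≠ 2 := by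
    rw [ringChar.eq F p]
    omega
  have hquad : χ z ^ 4 = signIndicator (cycClass α 2 0) z := by
    rw [signIndicator_cycClass_two hα hF, ← MulChar.pow_apply' χ (by norm_num),
      pow_four_eq_quadraticChar hF hχ, MulChar.ringHomComp_apply, eq_intCast]
  have hodd := odd_octicOdd α hneg
  have heven := even_octicEven α hneg
  have hJK : (octicRe α - quarticRe α : K) = -4 := by exact_mod_cast hJ
  have expand : (∑ x, signIndicator (octicSet α) x * signIndicator (octicSet α) (x - z) : K) =
      ∑ x, octicEven α χ x * octicEven α χ (x - z) + ∑ x, octicOdd α χ x * octicOdd α χ (x - z)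
      + (∑ x, octicOdd α χ x * octicEven α χ (x - z)
        + ∑ x, octicEven α χ x * octicOdd α χ (x - z)) := by
    simp only [signIndicator_octic hα hχ, ← sum_add_distrib]
    exact sum_congr rfl fun x _ => by ring
  have key : (∑ x, signIndicator (octicSet α) x * signIndicator (octicSet α) (x - z) : K) =
      signIndicator (octicSet α) z + signIndicator (octicSet α) (-z) - 1
        - 2 * signIndicator (cycClass α 2 0) z := by
    rw [expand, sum_mul_sub_add_sum_mul_sub_eq_zero hodd heven,
      sum_octicEven_mul_octicEven_sub hp8 hα h8 hχ hneg hz,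
      sum_octicOdd_mul_octicOdd_sub hp8 hα h8 hχ hneg hz, signIndicator_octic hα hχ,
      signIndicator_octic hα hχ, heven, hodd, ← hquad, octicEven]
    linear_combination (χ z ^ 4 / 2 + χ α ^ 2 / 4 * (χ z ^ 2 - χ z ^ 6)) * hJK
  exact_mod_cast key

theorem isSkewPDS_octicSet (hp8 : p % 8 = 3) (hα : IsPrimitiveRoot α (Fintype.card F - 1))
    (hF : Fintype.card F % 16 = 9) (hJ : octicRe α - quarticRe α = -4) :
    IsSkewPDS (octicSet α) (cycClass α 2 0) (Fintype.card F) ((Fintype.card F - 1) / 2)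
      ((Fintype.card F - 5) / 4) ((Fintype.card F - 1) / 4) := by
  have h8 : 8 ∣ Fintype.card F - 1 := by omega
  obtain ⟨χ, hχ⟩ :=
    MulChar.exists_mulChar_orderOf F h8 (Complex.isPrimitiveRoot_exp 8 (by norm_num))
  have hneg : χ (-1) = -1 :=
    mulChar_neg_one_eq_neg_one hα (n := 4) (e := (Fintype.card F - 1) / 8) (by norm_num) hχ
      (by omega) (by grind)
  have h0 : 0 ∉ octicSet α := by simp [octicSet, zero_notMem_cycClass hα]
  have hsum : ∑ x, signIndicator (octicSet α) x = 0 := by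
    have hsumC : (∑ x, signIndicator (octicSet α) x : ℂ) = 0 := by
      simp only [signIndicator_octic hα hχ, sum_add_distrib, sum_octicEven α hχ, zero_add,
        (odd_octicOdd α hneg).sum_eq_zero]
    exact_mod_cast hsumC
  exact ⟨isPDS_cycClass_two hα (by omega), card_eq_of_sum_signIndicator_eq_zero h0 hsum,
    intDiff_eq_of_autocorrelation h0 hsum fun z hz =>
      autocorrelation_octicSet hp8 hα h8 hχ hneg hJ hz⟩

end SkewPDS

/-- Let `q = p^m` with `p ≡ 3 (mod 8)` prime and `m ≡ 2 (mod 4)`; let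
`x, a, b` be integers with `x² = q`, `q = a² + 2b²`, `a ≡ 1 (mod 4)` and `a = x + 4`.
Then `D = C_0^8 ∪ C_1^8 ∪ C_2^8 ∪ C_5^8` is a skew Paley
`(q,(q-1)/2,(q-5)/4,(q-1)/4)`-PDS corresponding to `C_0^2`; that is,
`Δ(D) = ((q-5)/4) • C_0^2 + ((q-1)/4) • C_1^2`. -/
theorem stmt_6 {F : Type*} [Field F] [Fintype F] [DecidableEq F]
    (q p m : ℕ) (hp : p.Prime) (hp8 : p % 8 = 3) (hm : m % 4 = 2)
    (hq : Fintype.card F = q) (hqpm : q = p ^ m)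
    (α : F) (hα : IsPrimitiveElt α)
    (x a b : ℤ) (hx : x ^ 2 = (q : ℤ)) (hab : (q : ℤ) = a ^ 2 + 2 * b ^ 2)
    (ha4 : a % 4 = 1) (hxa : a = x + 4) :
    IsSkewPDS (cycClass α 8 0 ∪ cycClass α 8 1 ∪ cycClass α 8 2 ∪ cycClass α 8 5)
        (cycClass α 2 0) q ((q - 1) / 2) ((q - 5) / 4) ((q - 1) / 4) ∧
    intDiff (cycClass α 8 0 ∪ cycClass α 8 1 ∪ cycClass α 8 2 ∪ cycClass α 8 5) =
      ((q - 5) / 4) • (cycClass α 2 0).val + ((q - 1) / 4) • (cycClass α 2 1).val := by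
  subst hq
  have : Fact p.Prime := ⟨hp⟩
  have : CharP F p := charP_of_card_eq_prime_pow hqpm
  have hF16 : Fintype.card F % 16 = 9 := hqpm ▸ pow_mod_sixteen_eq_nine hp8 hm
  have hα := hα.isPrimitiveRoot (by omega)
  have hpa : ¬ (p : ℤ) ∣ a := hxa ▸ not_dvd_add_four_of_sq_eq_prime_pow hp (by omega)
    (show m ≠ 0 by omega) (by rw [hx, hqpm, Nat.cast_pow])
  obtain ⟨hRe, hquartic⟩ := octicRe_eq_neg_quarticRe_eq_neg hp8 hα (t := m / 2)
    (hqpm.trans (by congr 1; omega)) hF16 hx hab.symm ha4 (by omega) hpa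
  have hskew := isSkewPDS_octicSet hp8 hα hF16 (by omega)
  refine ⟨hskew, hskew.2.2.trans ?_⟩
  rw [erase_eq_of_notMem (zero_notMem_cycClass hα 2 0), gstar_sdiff_cycClass_two hα (by omega)]
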